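/- Let K be a UFD of characteristic p > 0 and let d be a nonzero K-derivation of K[x,y] with d* = 0, K[x,y]^d ≠ K[x^p,y^p], and d(x), d(y) coprime. Let g ∈ K[x,y] be such that g − g_{(p)} is nonzero, belongs to K[x,y]^d, and has minimal total degree among all nonzero polynomials of the form h − h_{(p)} (h ∈ K[x,y]) belonging to K[x,y]^d. Put ḡ = gcd(∂g/∂x, ∂g/∂y). Then ḡ·d = h·d_g, where h is an invertible element of K. -/

import Mathlib

/-!
Every derivation kills `g_{(p)}`, so `d g = 0`, i.e. `d(x) ∂g/∂x = d(y) (-∂g/∂y)`. As `d(x)` and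
`d(y)` are coprime, this forces `∂g/∂x = c d(y)` and `∂g/∂y = -c d(x)` for some polynomial `c`,
that is, `d_g = c d`. Coprimality also makes `c` a gcd of the two partial derivatives, so `ḡ` and
`c` differ by a unit of `K[x,y]`, which is a unit of `K`.
-/

open MvPolynomial

/-- `f_{(p)}`: the coefficient `a₀₀ ∈ K[x^p,y^p]` in the unique representation
`f = Σ_{0≤i,j<p} a_{ij} x^i y^j` with `a_{ij} ∈ K[x^p,y^p]`; concretely it is the
sum of the monomials of `f` in which both exponents are divisible by `p`. -/
noncomputable def pPart {K : Type*} [CommRing K] (p : ℕ)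
    (f : MvPolynomial (Fin 2) K) : MvPolynomial (Fin 2) K :=
  ∑ m ∈ f.support.filter (fun m => ∀ i, p ∣ m i), monomial m (coeff m f)

section Monoid

variable {M : Type*} [CommMonoidWithZero M] [IsCancelMulZero M] {a b : M}

theorem exists_eq_mul_and_eq_mul_of_isRelPrime [DecompositionMonoid M] {u v : M}
    (hab : IsRelPrime a b) (h : a * u = b * v) : ∃ c, u = c * b ∧ v = c * a := by
  obtain ⟨c, rfl⟩ : b ∣ u := hab.symm.dvd_of_dvd_mul_left ⟨v, h⟩
  rcases eq_or_ne b 0 with rfl | hb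
  · obtain ⟨e, rfl⟩ := (isRelPrime_zero_right.1 hab).dvd (a := v)
    exact ⟨e, by simp, mul_comm a e⟩
  · refine ⟨c, mul_comm b c, mul_left_cancel₀ hb ?_⟩
    rw [← h, mul_left_comm, mul_comm c a]

theorem associated_of_isRelPrime_of_dvd_mul {c e : M} (hab : IsRelPrime a b)
    (ha : e ∣ c * a) (hb : e ∣ c * b) (hc : c ∣ e) : Associated c e := by
  rcases eq_or_ne c 0 with rfl | hc0
  · rw [zero_dvd_iff.1 hc]
  obtain ⟨u, rfl⟩ := hc
  have hu : IsUnit u := hab ((mul_dvd_mul_iff_left hc0).1 ha) ((mul_dvd_mul_iff_left hc0).1 hb)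
  exact associated_mul_unit_right c u hu

end Monoid

section Derivation

variable {σ R A : Type*} [CommSemiring R] [AddCommMonoid A] [Module R A]
  [Module (MvPolynomial σ R) A]

theorem derivation_eq_sum_pderiv_smul [Fintype σ] (d : Derivation R (MvPolynomial σ R) A)
    (f : MvPolynomial σ R) : d f = ∑ i, pderiv i f • d (X i) := by
  classical
  induction f using MvPolynomial.induction_on with
  | C r => simp
  | add f₁ f₂ h₁ h₂ => simp only [map_add, h₁, h₂, add_smul, Finset.sum_add_distrib]
  | mul_X f j h =>
    have hj : ∑ i, f • (pderiv i (X j) : MvPolynomial σ R) • d (X i) = f • d (X j) := by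
      simp [pderiv_X, Pi.single_apply]
    simp only [Derivation.leibniz, h, smul_eq_mul, add_smul, Finset.sum_add_distrib, hj,
      Finset.smul_sum, mul_smul]

theorem pderiv_monomial_eq_zero_of_dvd (p : ℕ) [CharP R p] {i : σ} {m : σ →₀ ℕ} (hm : p ∣ m i)
    (r : R) : pderiv i (monomial m r) = 0 := by
  rw [pderiv_monomial, (CharP.cast_eq_zero_iff R p _).2 hm, mul_zero, monomial_zero]

end Derivation

section Plane

variable {K : Type*} [CommRing K]

theorem derivation_pPart {A : Type*} [AddCommMonoid A] [Module K A]
    [Module (MvPolynomial (Fin 2) K) A] (p : ℕ) [CharP K p]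
    (d : Derivation K (MvPolynomial (Fin 2) K) A) (f : MvPolynomial (Fin 2) K) :
    d (pPart p f) = 0 := by
  rw [pPart, map_sum]
  refine Finset.sum_eq_zero fun m hm => ?_
  have hdvd : ∀ i, p ∣ m i := (Finset.mem_filter.1 hm).2
  rw [derivation_eq_sum_pderiv_smul]
  exact Finset.sum_eq_zero fun i _ => by rw [pderiv_monomial_eq_zero_of_dvd p (hdvd i), zero_smul]

/-- The Jacobian derivation `d_f` of `K[x,y]`, which sends `g` to the determinant of the Jacobian
matrix of `(f, g)`; the variables `x` and `y` are `X 0` and `X 1`. -/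
noncomputable def jacobianDerivation (f : MvPolynomial (Fin 2) K) :
    Derivation K (MvPolynomial (Fin 2) K) (MvPolynomial (Fin 2) K) :=
  pderiv 0 f • pderiv 1 - pderiv 1 f • pderiv 0

theorem jacobianDerivation_apply (f g : MvPolynomial (Fin 2) K) :
    jacobianDerivation f g = pderiv 0 f * pderiv 1 g - pderiv 1 f * pderiv 0 g :=
  rfl

theorem jacobianDerivation_X_zero (f : MvPolynomial (Fin 2) K) :
    jacobianDerivation f (X 0) = -pderiv 1 f := by
  simp [jacobianDerivation_apply, pderiv_X]

theorem jacobianDerivation_X_one (f : MvPolynomial (Fin 2) K) :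
    jacobianDerivation f (X 1) = pderiv 0 f := by
  simp [jacobianDerivation_apply, pderiv_X]

variable [NoZeroDivisors K] [DecompositionMonoid (MvPolynomial (Fin 2) K)]
  {d : Derivation K (MvPolynomial (Fin 2) K) (MvPolynomial (Fin 2) K)}

theorem exists_jacobianDerivation_eq_smul (hcop : IsRelPrime (d (X 0)) (d (X 1)))
    {f : MvPolynomial (Fin 2) K} (hf : d f = 0) :
    ∃ c : MvPolynomial (Fin 2) K, jacobianDerivation f = c • d := by
  have hsyz : d (X 0) * pderiv 0 f = d (X 1) * -pderiv 1 f := by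
    rw [derivation_eq_sum_pderiv_smul, Fin.sum_univ_two, smul_eq_mul, smul_eq_mul] at hf
    linear_combination hf
  obtain ⟨c, hx, hy⟩ := exists_eq_mul_and_eq_mul_of_isRelPrime hcop hsyz
  refine ⟨c, derivation_ext fun i => ?_⟩
  fin_cases i
  · exact (jacobianDerivation_X_zero f).trans hy
  · exact (jacobianDerivation_X_one f).trans hx

theorem lemma3a_gbar_factorization_general (hcop : IsRelPrime (d (X 0)) (d (X 1)))
    {g gbar : MvPolynomial (Fin 2) K} (hg : d g = 0)
    (hgbar₁ : gbar ∣ pderiv 0 g) (hgbar₂ : gbar ∣ pderiv 1 g)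
    (hgbar₃ : ∀ q, q ∣ pderiv 0 g → q ∣ pderiv 1 g → q ∣ gbar) :
    ∃ h : K, IsUnit h ∧ gbar • d = h • jacobianDerivation g := by
  obtain ⟨c, hc⟩ := exists_jacobianDerivation_eq_smul hcop hg
  have hx : pderiv 0 g = c * d (X 1) := by
    rw [← jacobianDerivation_X_one, hc, Derivation.smul_apply, smul_eq_mul]
  have hy : pderiv 1 g = -(c * d (X 0)) := by
    rw [← smul_eq_mul, ← Derivation.smul_apply, ← hc, jacobianDerivation_X_zero, neg_neg]
  simp only [hx, hy, dvd_neg] at hgbar₁ hgbar₂ hgbar₃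
  have hassoc : Associated c gbar := associated_of_isRelPrime_of_dvd_mul hcop hgbar₂ hgbar₁
    (hgbar₃ c (dvd_mul_right c _) (dvd_mul_right c _))
  obtain ⟨u, rfl⟩ := hassoc
  obtain ⟨h, hh, hu⟩ := isUnit_iff_eq_C_of_isReduced.1 u.isUnit
  refine ⟨h, hh, ?_⟩
  rw [hc, hu, mul_comm, mul_smul, ← algebraMap_eq, algebraMap_smul]

end Plane

/-- Lemma 3 a).  `K` a UFD of characteristic `p > 0`, `d` a nonzero
`K`-derivation of `K[x,y]` with `d* = 0`, `K[x,y]^d ≠ K[x^p,y^p]`, and `d(x), d(y)`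
coprime.  If `g − g_{(p)}` is a nonzero constant of `d` of minimal total degree
among all nonzero constants of the form `h − h_{(p)}`, and
`ḡ = gcd(∂g/∂x, ∂g/∂y)`, then `ḡ·d = h·d_g` for some invertible `h ∈ K`. -/
theorem lemma3a_gbar_factorization
    {K : Type*} [CommRing K] [IsDomain K] [UniqueFactorizationMonoid K]
    (p : ℕ) [Fact p.Prime] [CharP K p]
    (d : Derivation K (MvPolynomial (Fin 2) K) (MvPolynomial (Fin 2) K))
    (hd : d ≠ 0)
    (hdiv : pderiv (0 : Fin 2) (d (X 0)) + pderiv (1 : Fin 2) (d (X 1)) = 0)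
    (hne : {q : MvPolynomial (Fin 2) K | d q = 0} ≠
      ↑(Algebra.adjoin K ({X 0 ^ p, X 1 ^ p} : Set (MvPolynomial (Fin 2) K))))
    (hcop : ∀ q : MvPolynomial (Fin 2) K, q ∣ d (X 0) → q ∣ d (X 1) → IsUnit q)
    (g : MvPolynomial (Fin 2) K)
    (hg₁ : g - pPart p g ≠ 0)
    (hg₂ : d (g - pPart p g) = 0)
    (hgmin : ∀ h : MvPolynomial (Fin 2) K, h - pPart p h ≠ 0 → d (h - pPart p h) = 0 →
      (g - pPart p g).totalDegree ≤ (h - pPart p h).totalDegree)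
    (gbar : MvPolynomial (Fin 2) K)
    (hgbar₁ : gbar ∣ pderiv (0 : Fin 2) g)
    (hgbar₂ : gbar ∣ pderiv (1 : Fin 2) g)
    (hgbar₃ : ∀ q : MvPolynomial (Fin 2) K,
      q ∣ pderiv (0 : Fin 2) g → q ∣ pderiv (1 : Fin 2) g → q ∣ gbar) :
    ∃ h : K, IsUnit h ∧ ∀ q,
      gbar * d q =
        C h * (pderiv (0 : Fin 2) g * pderiv (1 : Fin 2) q
             - pderiv (1 : Fin 2) g * pderiv (0 : Fin 2) q) := by
  obtain ⟨h, hh, hfact⟩ := lemma3a_gbar_factorization_general (fun q => hcop q)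
    (by simpa [derivation_pPart] using hg₂) hgbar₁ hgbar₂ hgbar₃
  exact ⟨h, hh, fun q => by
    simpa [jacobianDerivation_apply, smul_eq_C_mul] using DFunLike.congr_fun hfact q⟩
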